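/- Suppose a Katětov assignment for the class of good colored orders exists. Let M be a Fraïssé limit of the class of finite good colored orders, let x ⊆ M be a finite subset, and let B = x ∪ {b} be a good colored order extending the induced structure on x by one new point b. Then there exist a good colored order N, an embedding j : M → N, and t ∈ N with t ∉ j[M] and N = j[M] ∪ {t}, such that the map sending v ↦ j(v) for v ∈ x and b ↦ t is an embedding of B into N, and for every automorphism α of M with α(v) = v for all v ∈ x there is an automorphism β of N with β(t) = t and β ∘ j = j ∘ α. -/

import Mathlib

/-!
Let `i : x → M` be the inclusion. The point `b` of `B` is realized by some `t₀ ∈ K(x)` over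
`η_x`; put `t = K(i)(t₀) ∈ K(M)`. If an automorphism `α` of `M` fixes `x` pointwise, then
`α ∘ i = i`, so by functoriality `K(α)(t) = K(α ∘ i)(t₀) = t`. By naturality `K(α)` extends `α`
along `η_M`, so it restricts to an automorphism of `N = η_M[M] ∪ {t}` fixing `t`.

It remains to see that `t ∉ η_M[M]`. If `t = η_M(m)`, then `m ∉ x`, because `t₀ ∉ η_x[x]`, and
`m` is fixed by every automorphism of `M` that fixes `x` pointwise. This is impossible
in a Fraïssé limit (`IsFLim.exists_auto_moving`): add to `x ∪ {m}` a twin of `m`, just above `m`,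
with the same colors to `x` as `m` and a fresh color to `m`; realize it in `M`; and move `m` to it
by ultrahomogeneity.
-/

/-- A colored order structure on a type `X`: a strict linear order `lt` together with a
symmetric coloring `c` of pairs of distinct elements by natural numbers. -/
structure ColOrd (X : Type) where
  lt : X → X → Prop
  c : X → X → ℕ
  lt_irrefl : ∀ a, ¬ lt a a
  lt_trans : ∀ ⦃a b d⦄, lt a b → lt b d → lt a d
  lt_total : ∀ a b, a ≠ b → lt a b ∨ lt b a
  c_symm : ∀ a b, a ≠ b → c a b = c b a

/-- A colored order is *good* if it contains no monochromatic triangle. -/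
def ColOrd.Good {X : Type} (S : ColOrd X) : Prop :=
  ¬ ∃ a b d : X, a ≠ b ∧ b ≠ d ∧ a ≠ d ∧ S.c a b = S.c b d ∧ S.c a b = S.c a d

/-- An embedding of colored orders: a strictly order-preserving injection which
preserves the colors of pairs of distinct elements. -/
def IsEmb {X Y : Type} (S : ColOrd X) (T : ColOrd Y) (f : X → Y) : Prop :=
  Function.Injective f ∧
  (∀ a b, S.lt a b ↔ T.lt (f a) (f b)) ∧
  (∀ a b, a ≠ b → T.c (f a) (f b) = S.c a b)

/-- An automorphism is a surjective self-embedding. -/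
def IsAuto {X : Type} (S : ColOrd X) (α : X → X) : Prop :=
  Function.Surjective α ∧ IsEmb S S α

/-- `B`, a colored order on `Option A` (where `some a` represents the point `a ∈ A` and
`none` represents a new point), extends the structure induced by `S` on `A ⊆ X`. -/
def ExtendsOn {X : Type} (S : ColOrd X) (A : Set X) (B : ColOrd (Option A)) : Prop :=
  (∀ a b : A, B.lt (some a) (some b) ↔ S.lt a b) ∧
  (∀ a b : A, (a : X) ≠ (b : X) → B.c (some a) (some b) = S.c a b)

/-- The one-point extension property: every good one-point extension of (the structure
induced on) a finite subset `A` is realized by some `t ∉ A`, in the sense that the map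
fixing `A` pointwise and sending the new point to `t` is an isomorphism onto `A ∪ {t}`. -/
def OnePointExtProp {X : Type} (S : ColOrd X) : Prop :=
  ∀ A : Set X, A.Finite → ∀ B : ColOrd (Option A), B.Good → ExtendsOn S A B →
    ∃ t : X, t ∉ A ∧
      (∀ a : A, (B.lt (some a) none ↔ S.lt a t) ∧ (B.lt none (some a) ↔ S.lt t a)) ∧
      (∀ a : A, B.c (some a) none = S.c a t ∧ B.c none (some a) = S.c t a)

/-- Ultrahomogeneity: every isomorphism between finite subsets (with the induced
structure) extends to an automorphism. -/
def Ultrahomogeneous {X : Type} (S : ColOrd X) : Prop :=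
  ∀ (A B : Set X), A.Finite → B.Finite → ∀ g : A → B, Function.Bijective g →
    (∀ a b : A, S.lt (g a : X) (g b : X) ↔ S.lt a b) →
    (∀ a b : A, (a : X) ≠ (b : X) → S.c (g a : X) (g b : X) = S.c a b) →
    ∃ α : X → X, IsAuto S α ∧ ∀ a : A, α a = g a

/-- A Fraïssé limit of the class of finite good colored orders: a countably infinite
good colored order which is ultrahomogeneous and has the one-point extension property. -/
def IsFLim {X : Type} (S : ColOrd X) : Prop :=
  Countable X ∧ Infinite X ∧ S.Good ∧ Ultrahomogeneous S ∧ OnePointExtProp S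

/-- A Katětov assignment for the class of good colored orders: a functorial assignment
`X ↦ K(X)` on countable good colored orders together with natural embeddings
`η_X : X → K(X)` such that every good one-point extension of a finite subset of `X`
is realized in `K(X)` over `η_X`. -/
structure KatetovAssignment where
  /-- the carrier of `K(X)` -/
  Carrier : ∀ (X : Type) (S : ColOrd X), Countable X → S.Good → Type
  /-- the colored-order structure of `K(X)` -/
  str : ∀ (X : Type) (S : ColOrd X) (hc : Countable X) (hg : S.Good),
    ColOrd (Carrier X S hc hg)
  countable : ∀ X S hc hg, Countable (Carrier X S hc hg)
  good : ∀ X S hc hg, (str X S hc hg).Good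
  /-- the natural embedding `η_X : X → K(X)` -/
  eta : ∀ X S hc hg, X → Carrier X S hc hg
  eta_emb : ∀ X S hc hg, IsEmb S (str X S hc hg) (eta X S hc hg)
  /-- the action `K(f)` on embeddings -/
  map : ∀ (X Y : Type) (SX : ColOrd X) (SY : ColOrd Y)
    (hcX : Countable X) (hgX : SX.Good) (hcY : Countable Y) (hgY : SY.Good)
    (f : X → Y), IsEmb SX SY f → Carrier X SX hcX hgX → Carrier Y SY hcY hgY
  map_emb : ∀ X Y SX SY hcX hgX hcY hgY (f : X → Y) (hf : IsEmb SX SY f),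
    IsEmb (str X SX hcX hgX) (str Y SY hcY hgY) (map X Y SX SY hcX hgX hcY hgY f hf)
  map_id : ∀ X S hc hg (h : IsEmb S S id),
    map X X S S hc hg hc hg id h = id
  map_comp : ∀ (X Y Z : Type) (SX : ColOrd X) (SY : ColOrd Y) (SZ : ColOrd Z)
    (hcX : Countable X) (hgX : SX.Good) (hcY : Countable Y) (hgY : SY.Good)
    (hcZ : Countable Z) (hgZ : SZ.Good)
    (f : X → Y) (g : Y → Z) (hf : IsEmb SX SY f) (hg : IsEmb SY SZ g)
    (hgf : IsEmb SX SZ (g ∘ f)),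
    map X Z SX SZ hcX hgX hcZ hgZ (g ∘ f) hgf =
      map Y Z SY SZ hcY hgY hcZ hgZ g hg ∘ map X Y SX SY hcX hgX hcY hgY f hf
  naturality : ∀ X Y SX SY hcX hgX hcY hgY (f : X → Y) (hf : IsEmb SX SY f),
    map X Y SX SY hcX hgX hcY hgY f hf ∘ eta X SX hcX hgX = eta Y SY hcY hgY ∘ f
  realizes : ∀ X S hc hg (A : Set X), A.Finite →
    ∀ B : ColOrd (Option A), B.Good → ExtendsOn S A B →
      ∃ t : Carrier X S hc hg,
        IsEmb B (str X S hc hg)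
          (fun o => Option.elim o t (fun a => eta X S hc hg a))

section ColoredOrders

variable {X Y Z : Type}

theorem IsEmb.comp {S : ColOrd X} {T : ColOrd Y} {U : ColOrd Z} {f : X → Y} {g : Y → Z}
    (hg : IsEmb T U g) (hf : IsEmb S T f) : IsEmb S U (g ∘ f) :=
  ⟨hg.1.comp hf.1, fun a b => (hf.2.1 a b).trans (hg.2.1 _ _),
    fun a b hab => (hg.2.2 _ _ (hf.1.ne hab)).trans (hf.2.2 a b hab)⟩

theorem IsEmb.of_comp {S : ColOrd X} {T : ColOrd Y} {U : ColOrd Z} {f : X → Y} {g : Y → Z}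
    (hg : IsEmb T U g) (h : IsEmb S U (g ∘ f)) : IsEmb S T f := by
  have hf : Function.Injective f := Function.Injective.of_comp h.1
  exact ⟨hf, fun a b => (h.2.1 a b).trans (hg.2.1 _ _).symm,
    fun a b hab => (hg.2.2 _ _ (hf.ne hab)).symm.trans (h.2.2 a b hab)⟩

/-- The colored order induced on `X` by an injection into a colored order. -/
def ColOrd.comap (S : ColOrd Y) (f : X → Y) (hf : Function.Injective f) : ColOrd X where
  lt a b := S.lt (f a) (f b)
  c a b := S.c (f a) (f b)
  lt_irrefl _ := S.lt_irrefl _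
  lt_trans _ _ _ h h' := S.lt_trans h h'
  lt_total _ _ h := S.lt_total _ _ (hf.ne h)
  c_symm _ _ h := S.c_symm _ _ (hf.ne h)

theorem ColOrd.comap_emb (S : ColOrd Y) (f : X → Y) (hf : Function.Injective f) :
    IsEmb (S.comap f hf) S f :=
  ⟨hf, fun _ _ => Iff.rfl, fun _ _ _ => rfl⟩

theorem ColOrd.Good.comap {S : ColOrd Y} (hS : S.Good) (f : X → Y) (hf : Function.Injective f) :
    (S.comap f hf).Good := by
  rintro ⟨a, b, d, h1, h2, h3, h4, h5⟩
  exact hS ⟨f a, f b, f d, hf.ne h1, hf.ne h2, hf.ne h3, h4, h5⟩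

open Classical in
/-- The colored order obtained from a subset `A` by adding a twin `none` of `m`: it lies
immediately above `m`, has color `k` to `m` (if `m ∈ A`), and is otherwise related to `A` exactly
as `m` is. -/
noncomputable def ColOrd.twin (S : ColOrd X) (A : Set X) (m : X) (k : ℕ) : ColOrd (Option A) where
  lt a b := S.lt (a.elim m Subtype.val) (b.elim m Subtype.val) ∨
    (a.elim m Subtype.val = b.elim m Subtype.val ∧ a ≠ none ∧ b = none)
  c a b := if a.elim m Subtype.val = b.elim m Subtype.val then k
    else S.c (a.elim m Subtype.val) (b.elim m Subtype.val)
  lt_irrefl a := by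
    rintro (h | ⟨-, h, h'⟩)
    exacts [S.lt_irrefl _ h, h h']
  lt_trans a b d := by
    rintro (h | ⟨h, h1, h2⟩) (h' | ⟨h', h1', h2'⟩)
    · exact Or.inl (S.lt_trans h h')
    · exact Or.inl (h' ▸ h)
    · exact Or.inl (h ▸ h')
    · exact absurd h2 h1'
  lt_total a b hab := by
    by_cases h : a.elim m Subtype.val = b.elim m Subtype.val
    · rcases a with _ | a <;> rcases b with _ | b
      · exact absurd rfl hab
      · exact Or.inr (Or.inr ⟨h.symm, by simp, rfl⟩)
      · exact Or.inl (Or.inr ⟨h, by simp, rfl⟩)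
      · exact absurd (congrArg some (Subtype.ext h)) hab
    · exact (S.lt_total _ _ h).imp Or.inl Or.inl
  c_symm a b _ := by
    by_cases h : a.elim m Subtype.val = b.elim m Subtype.val
    · simp [h]
    · simp only [h, Ne.symm h, if_false]
      exact S.c_symm _ _ h

theorem ColOrd.Good.twin {S : ColOrd X} (hS : S.Good) (A : Set X) (m : X) (k : ℕ)
    (hk : ∀ v ∈ A, v ≠ m → k ≠ S.c m v) : (S.twin A m k).Good := by
  have hk' : ∀ v ∈ A, v ≠ m → k ≠ S.c v m := fun v hv h => S.c_symm m v h.symm ▸ hk v hv h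
  have hinj : ∀ a b : A, (a : X) = b → a = b := fun _ _ => Subtype.ext
  rintro ⟨a, b, d, h1, h2, h3, h4, h5⟩
  simp only [ColOrd.twin] at h4 h5
  by_cases e1 : a.elim m Subtype.val = b.elim m Subtype.val
  · rcases a with _ | ⟨a, ha⟩ <;> rcases b with _ | ⟨b, hb⟩ <;> rcases d with _ | ⟨d, hd⟩ <;>
      simp_all <;> grind
  by_cases e2 : b.elim m Subtype.val = d.elim m Subtype.val
  · rcases a with _ | ⟨a, ha⟩ <;> rcases b with _ | ⟨b, hb⟩ <;> rcases d with _ | ⟨d, hd⟩ <;>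
      simp_all <;> grind
  by_cases e3 : a.elim m Subtype.val = d.elim m Subtype.val
  · rcases a with _ | ⟨a, ha⟩ <;> rcases b with _ | ⟨b, hb⟩ <;> rcases d with _ | ⟨d, hd⟩ <;>
      simp_all <;> grind
  simp only [e1, e2, e3, if_false] at h4 h5
  exact hS ⟨_, _, _, e1, e2, e3, h4, h5⟩

theorem ColOrd.twin_extendsOn (S : ColOrd X) (A : Set X) (m : X) (k : ℕ) :
    ExtendsOn S A (S.twin A m k) := by
  refine ⟨fun a b => ?_, fun a b h => ?_⟩
  · simp [ColOrd.twin]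
  · simp only [ColOrd.twin, Option.elim_some]
    exact if_neg h

/-- In a Fraïssé limit, no point outside a finite set `x` is fixed by all automorphisms fixing `x`
pointwise. -/
theorem IsFLim.exists_auto_moving {S : ColOrd X} (hS : IsFLim S) {x : Set X} (hx : x.Finite)
    {m : X} (hm : m ∉ x) : ∃ α, IsAuto S α ∧ (∀ v ∈ x, α v = v) ∧ α m ≠ m := by
  classical
  obtain ⟨-, -, hgood, huh, hext⟩ := hS
  obtain ⟨k, hk⟩ := (hx.image (S.c m)).exists_notMem
  have hk' : ∀ v ∈ insert m x, v ≠ m → k ≠ S.c m v := by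
    rintro v (rfl | hv) hne rfl
    exacts [hne rfl, hk ⟨v, hv, rfl⟩]
  obtain ⟨m', hm', hlt, hc⟩ := hext (insert m x) (hx.insert m) (S.twin _ m k)
    (hgood.twin _ m k hk') (S.twin_extendsOn _ m k)
  have hne : m' ≠ m := fun h => hm' (h ▸ Set.mem_insert _ _)
  have hm'x : m' ∉ x := fun h => hm' (Set.mem_insert_of_mem _ h)
  have key : ∀ v ∈ x, (S.lt v m' ↔ S.lt v m) ∧ (S.lt m' v ↔ S.lt m v) ∧
      S.c v m' = S.c v m ∧ S.c m' v = S.c m v := by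
    intro v hv
    have hvm : v ≠ m := fun h => hm (h ▸ hv)
    have h1 := hlt ⟨v, Set.mem_insert_of_mem _ hv⟩
    have h2 := hc ⟨v, Set.mem_insert_of_mem _ hv⟩
    simp [ColOrd.twin, hvm, hvm.symm] at h1 h2
    exact ⟨h1.1.symm, h1.2.symm, h2.1.symm, h2.2.symm⟩
  have hmem : ∀ a : (insert m x : Set X),
      (if (a : X) = m then m' else (a : X)) ∈ (insert m' x : Set X) := by
    rintro ⟨a, rfl | ha⟩
    · simp
    · have : a ≠ m := fun h => hm (h ▸ ha)
      simp [this, ha]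
  let g : ↥(insert m x : Set X) → ↥(insert m' x : Set X) := fun a => ⟨_, hmem a⟩
  have hbij : Function.Bijective g := by
    constructor
    · rintro ⟨a, ha⟩ ⟨b, hb⟩ hab
      simp only [g, Subtype.mk.injEq] at hab ⊢
      simp only [Set.mem_insert_iff] at ha hb
      grind
    · rintro ⟨b, rfl | hb⟩
      · exact ⟨⟨m, Set.mem_insert _ _⟩, by simp [g]⟩
      · have : b ≠ m := fun h => hm (h ▸ hb)
        exact ⟨⟨b, Set.mem_insert_of_mem _ hb⟩, by simp [g, this]⟩
  have hglt : ∀ a b : ↥(insert m x : Set X), S.lt (g a : X) (g b : X) ↔ S.lt a b := by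
    rintro ⟨a, ha⟩ ⟨b, hb⟩
    simp only [Set.mem_insert_iff] at ha hb
    have := S.lt_irrefl m
    have := S.lt_irrefl m'
    grind
  have hgc : ∀ a b : ↥(insert m x : Set X), (a : X) ≠ (b : X) →
        S.c (g a : X) (g b : X) = S.c a b := by
    rintro ⟨a, ha⟩ ⟨b, hb⟩ hab
    simp only [Set.mem_insert_iff] at ha hb
    grind
  obtain ⟨α, hα, hαg⟩ := huh _ _ (hx.insert m) (hx.insert m') g hbij hglt hgc
  refine ⟨α, hα, fun v hv => ?_, ?_⟩
  · have hvm : v ≠ m := fun h => hm (h ▸ hv)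
    simpa [g, hvm] using hαg ⟨v, Set.mem_insert_of_mem _ hv⟩
  · have := hαg ⟨m, Set.mem_insert _ _⟩
    simp only [g, if_true] at this
    rwa [this]

end ColoredOrders

/-- If a Katětov assignment exists, then a Fraïssé limit `M` of the
class of finite good colored orders admits homogeneous one-point extensions: for every
finite `x ⊆ M` and every good one-point extension `B` of (the structure induced on)
`x`, there is a good colored order `N = j[M] ∪ {t}` realizing `B` over `x` such that
every automorphism of `M` fixing `x` pointwise lifts to an automorphism of `N`
fixing `t`. -/
theorem katetov_gives_homogeneous_one_point_extension
    (K : KatetovAssignment)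
    {M : Type} (S : ColOrd M) (hS : IsFLim S)
    (x : Set M) (hx : x.Finite) (B : ColOrd (Option x)) (hB : B.Good)
    (hBext : ExtendsOn S x B) :
    ∃ (N : Type) (T : ColOrd N) (j : M → N) (t : N),
      T.Good ∧ IsEmb S T j ∧ t ∉ Set.range j ∧ (∀ y : N, y ∈ Set.range j ∨ y = t) ∧
      IsEmb B T (fun o => Option.elim o t (fun a => j a)) ∧
      ∀ α : M → M, IsAuto S α → (∀ v ∈ x, α v = v) →
        ∃ β : N → N, IsAuto T β ∧ β t = t ∧ β ∘ j = j ∘ α := by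
  have hc : Countable M := hS.1
  have hg : S.Good := hS.2.2.1
  have hi : Function.Injective (Subtype.val : x → M) := Subtype.val_injective
  have hcx : Countable x := inferInstance
  have hfx : Finite x := hx
  set Sx : ColOrd x := S.comap Subtype.val hi with hSx
  have hgx : Sx.Good := hg.comap _ hi
  have hiemb : IsEmb Sx S Subtype.val := S.comap_emb _ hi
  -- `B` is transported to an extension of the full subset of `x`, and realized in `K(x)`.
  have hp : Function.Injective (Option.map (Subtype.val : ↥(Set.univ : Set x) → x)) :=
    Option.map_injective Subtype.val_injective
  obtain ⟨t₀, ht₀⟩ := K.realizes x Sx hcx hgx Set.univ Set.finite_univ (B.comap _ hp)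
    (hB.comap _ hp) ⟨fun a b => hBext.1 a b,
      fun a b h => hBext.2 a b (Subtype.coe_ne_coe.2 h)⟩
  have ht₀B : IsEmb B (K.str x Sx hcx hgx)
      (fun o => Option.elim o t₀ (fun a => K.eta x Sx hcx hgx a)) := by
    have hq : IsEmb B (B.comap _ hp) (Option.map fun a => ⟨a, Set.mem_univ a⟩) := by
      refine (B.comap_emb _ hp).of_comp ?_
      have : Option.map (Subtype.val : ↥(Set.univ : Set x) → x) ∘
          Option.map (fun a => ⟨a, Set.mem_univ a⟩) = id := by
        funext o; cases o <;> rfl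
      rw [this]
      exact ⟨Function.injective_id, fun _ _ => Iff.rfl, fun _ _ _ => rfl⟩
    convert ht₀.comp hq using 1
    funext o; cases o <;> rfl
  let Ki := K.map x M Sx S hcx hgx hc hg Subtype.val hiemb
  let η := K.eta M S hc hg
  have hKi : IsEmb _ _ Ki := K.map_emb x M Sx S hcx hgx hc hg Subtype.val hiemb
  have hη : IsEmb S _ η := K.eta_emb M S hc hg
  have hnat : ∀ a, Ki (K.eta x Sx hcx hgx a) = η a :=
    congrFun (K.naturality x M Sx S hcx hgx hc hg Subtype.val hiemb)
  have hmapη : ∀ α (hα : IsEmb S S α) a, K.map M M S S hc hg hc hg α hα (η a) = η (α a) :=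
    fun α hα => congrFun (K.naturality M M S S hc hg hc hg α hα)
  have hfix : ∀ α (hα : IsEmb S S α), (∀ v ∈ x, α v = v) →
      K.map M M S S hc hg hc hg α hα (Ki t₀) = Ki t₀ := by
    intro α hα hv
    have hcomp : α ∘ (Subtype.val : x → M) = Subtype.val := funext fun a => hv a a.2
    have h := K.map_comp x M M Sx S S hcx hgx hc hg hc hg Subtype.val α hiemb hα
      (hα.comp hiemb)
    have h' := (congrFun h t₀).symm
    simp only [hcomp] at h'
    exact h'
  have htη : ∀ m, η m ≠ Ki t₀ := by
    intro m hm
    by_cases hmx : m ∈ x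
    · have h : K.eta x Sx hcx hgx ⟨m, hmx⟩ = t₀ := hKi.1 ((hnat ⟨m, hmx⟩).trans hm)
      have := @ht₀B.1 (some ⟨m, hmx⟩) none h
      cases this
    · obtain ⟨α, hα, hαx, hαm⟩ := hS.exists_auto_moving hx hmx
      refine hαm (hη.1 ?_)
      rw [← hmapη α hα.2, hm, hfix α hα.2 hαx]
  -- `N` is `Option M`, with the structure induced from `K(M)` along `η` and `none ↦ t`.
  let e : Option M → K.Carrier M S hc hg := fun o => o.elim (Ki t₀) η
  have he : Function.Injective e := by
    rintro (_ | a) (_ | b) h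
    · rfl
    · exact absurd h.symm (htη b)
    · exact absurd h (htη a)
    · exact congrArg some (hη.1 h)
  have heemb := (K.str M S hc hg).comap_emb e he
  refine ⟨Option M, (K.str M S hc hg).comap e he, some, none, (K.good M S hc hg).comap e he,
    heemb.of_comp hη, by simp, ?_, ?_, ?_⟩
  · rintro (_ | a)
    exacts [Or.inr rfl, Or.inl ⟨a, rfl⟩]
  · refine heemb.of_comp ?_
    convert hKi.comp ht₀B using 1
    funext o
    rcases o with _ | a
    exacts [rfl, (hnat a).symm]
  · intro α hα hαx
    refine ⟨Option.map α, ⟨?_, heemb.of_comp ?_⟩, rfl, rfl⟩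
    · rintro (_ | a)
      · exact ⟨none, rfl⟩
      · obtain ⟨b, rfl⟩ := hα.1 a
        exact ⟨some b, rfl⟩
    · convert (K.map_emb M M S S hc hg hc hg α hα.2).comp heemb using 1
      funext o
      rcases o with _ | a
      exacts [(hfix α hα.2 hαx).symm, (hmapη α hα.2 a).symm]
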